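/- Let R be a centrally essential ring and let J be a right ideal of R which is semiprime as a ring. If the right annihilator Ann_R(J) = {t ∈ R : J*t = 0} is zero, then J is contained in the center C(R) of R. -/

import Mathlib

/-- A unital ring `R` is centrally essential if for every nonzero `a ∈ R` there exists a
central element `c` such that `a * c` is a nonzero central element. -/
def IsCentrallyEssential (R : Type*) [Ring R] : Prop :=
  ∀ a : R, a ≠ 0 → ∃ c ∈ Set.center R, a * c ∈ Set.center R ∧ a * c ≠ 0

/-!
For `a` in a centrally essential ring `R`, the central elements `w` with `a * w` central form an
essential ideal of the center `C`, and every such `w` kills the commutators `a * b - b * a`. If such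
a commutator is nonzero, it has a nonzero central multiple `z`; the ideal contains a nonzero
multiple `w` of `z`, and `z * w = 0` forces `w * w = 0`. Hence `R` is commutative as soon as `C` is
reduced. It is reduced here, because a central `z` with `z * z = 0` makes `J * z` an ideal of `J` of
square zero, so `J * z = 0` and therefore `z = 0`.
-/

/-- The ring `(J, +, ·)` is semiprime. This is stated through additive subgroups of the ambient
ring, so that `J`, which need not contain a unit, does not have to be turned into a ring itself. -/
def IsSemiprimeAsRing {R : Type*} [NonUnitalRing R] (J : AddSubgroup R) : Prop :=
  ∀ N : AddSubgroup R, (N : Set R) ⊆ (J : Set R) →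
    (∀ x ∈ J, ∀ n ∈ N, x * n ∈ N) → (∀ x ∈ J, ∀ n ∈ N, n * x ∈ N) →
    (∀ m ∈ N, ∀ n ∈ N, m * n = 0) → N = ⊥

theorem IsSemiprimeAsRing.mul_eq_zero_of_mul_self_eq_zero {R : Type*} [NonUnitalRing R]
    {J : AddSubgroup R} (hJ : IsSemiprimeAsRing J) (hJmul : ∀ x ∈ J, ∀ y ∈ J, x * y ∈ J)
    {z : R} (hJz : ∀ x ∈ J, x * z ∈ J) (hcomm : ∀ x ∈ J, Commute x z) (hz : z * z = 0)
    {x : R} (hx : x ∈ J) : x * z = 0 := by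
  suffices hbot : J.map (AddMonoidHom.mulRight z) = ⊥ from
    AddSubgroup.mem_bot.mp (hbot ▸ AddSubgroup.mem_map_of_mem (AddMonoidHom.mulRight z) hx)
  apply hJ
  · rintro _ ⟨y, hy, rfl⟩
    exact hJz y hy
  · rintro u hu _ ⟨y, hy, rfl⟩
    exact ⟨u * y, hJmul u hu y hy, mul_assoc u y z⟩
  · rintro u hu _ ⟨y, hy, rfl⟩
    exact ⟨y * u, hJmul y hy u hu, (hcomm u hu).right_comm y⟩
  · rintro _ ⟨u, -, rfl⟩ _ ⟨y, hy, rfl⟩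
    calc u * z * (y * z) = u * y * (z * z) := (hcomm y hy).symm.mul_mul_mul_comm u z
      _ = 0 := by rw [hz, mul_zero]

theorem mul_mul_eq_mul_mul_of_mul_mem_center {S : Type*} [Semigroup S] {a c : S}
    (hc : c ∈ Set.center S) (hac : a * c ∈ Set.center S) (b : S) : a * b * c = b * a * c :=
  calc a * b * c = a * c * b := (hc.comm b).symm.right_comm a
    _ = b * (a * c) := hac.comm b
    _ = b * a * c := (mul_assoc b a c).symm

namespace IsCentrallyEssential

variable {R : Type*} [Ring R]

theorem exists_mul_mem_center_of_ne_zero (hR : IsCentrallyEssential R) (a : R) {z : R}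
    (hz : z ≠ 0) : ∃ c ∈ Set.center R, a * (z * c) ∈ Set.center R ∧ z * c ≠ 0 := by
  by_cases haz : a * z = 0
  · refine ⟨1, Set.one_mem_center, ?_, by rwa [mul_one]⟩
    rw [mul_one, haz]
    exact Set.zero_mem_center
  · obtain ⟨c, hc, hazc, hazc_ne⟩ := hR (a * z) haz
    rw [mul_assoc] at hazc hazc_ne
    exact ⟨c, hc, hazc, right_ne_zero_of_mul hazc_ne⟩

theorem commute_of_isReduced_center (hR : IsCentrallyEssential R) [IsReduced (Subring.center R)]
    (a b : R) : Commute a b := by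
  by_contra hab
  obtain ⟨e, he, hz, hz_ne⟩ := hR (a * b - b * a) (sub_ne_zero.mpr hab)
  set z := (a * b - b * a) * e
  obtain ⟨c, hc, haw, hw_ne⟩ := hR.exists_mul_mem_center_of_ne_zero a hz_ne
  set w := z * c
  have hw : w ∈ Set.center R := Set.mul_mem_center hz hc
  have hzw : z * w = 0 :=
    calc z * w = (a * b - b * a) * w * e := (he.comm w).right_comm _
      _ = 0 := by rw [sub_mul, mul_mul_eq_mul_mul_of_mul_mem_center hw haw, sub_self, zero_mul]
  have hww : w * w = 0 :=
    calc w * w = z * w * c := (hc.comm w).right_comm z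
      _ = 0 := by rw [hzw, zero_mul]
  have hw_nilpotent : IsNilpotent (⟨w, hw⟩ : Subring.center R) :=
    ⟨2, Subtype.ext ((sq w).trans hww)⟩
  exact hw_ne (congrArg Subtype.val hw_nilpotent.eq_zero)

end IsCentrallyEssential

theorem stmt4_general {R : Type*} [Ring R] (hR : IsCentrallyEssential R) {J : AddSubgroup R}
    (hJmul : ∀ x ∈ J, ∀ y ∈ J, x * y ∈ J) (hJcenter : ∀ x ∈ J, ∀ c ∈ Set.center R, x * c ∈ J)
    (hJsemiprime : IsSemiprimeAsRing J) (hAnn : ∀ t : R, (∀ x ∈ J, x * t = 0) → t = 0)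
    (a b : R) : Commute a b := by
  have : IsReduced (Subring.center R) := by
    refine (isReduced_iff_pow_one_lt 2 one_lt_two).mpr fun ⟨z, hz⟩ hzz ↦ Subtype.ext ?_
    have hzz' : z * z = 0 := by simpa [sq] using congrArg Subtype.val hzz
    exact hAnn z fun x hx ↦ hJsemiprime.mul_eq_zero_of_mul_self_eq_zero hJmul
      (fun y hy ↦ hJcenter y hy z hz) (fun y _ ↦ (hz.comm y).symm) hzz' hx
  exact hR.commute_of_isReduced_center a b

/-- Let `R` be a centrally essential ring and let `J` be a right ideal of `R` which is
semiprime as a ring. If the right annihilator `Ann_R(J) = {t : J * t = 0}` is zero,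
then `J` is contained in the center of `R`. -/
theorem stmt4 (R : Type*) [Ring R] (hR : IsCentrallyEssential R)
    (J : AddSubgroup R) (hJright : ∀ x ∈ J, ∀ r : R, x * r ∈ J)
    (hJsemiprime : ∀ N : AddSubgroup R, (N : Set R) ⊆ (J : Set R) →
      (∀ x ∈ J, ∀ n ∈ N, x * n ∈ N) → (∀ x ∈ J, ∀ n ∈ N, n * x ∈ N) →
      (∀ m ∈ N, ∀ n ∈ N, m * n = 0) → N = ⊥)
    (hAnn : ∀ t : R, (∀ x ∈ J, x * t = 0) → t = 0) :
    (J : Set R) ⊆ Set.center R :=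
  fun x _ ↦ Semigroup.mem_center_iff.mpr fun r ↦
    stmt4_general hR (fun y hy s _ ↦ hJright y hy s) (fun y hy c _ ↦ hJright y hy c)
      hJsemiprime hAnn r x
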